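/- Let n ≥ 3 and 0 ≤ i ≤ n−2 be integers with n > i² + 5i + 1, and let l ≥ 1. Let L be the weight vector in ℙⁿ with lᵢ = l and all other entries zero (a homogeneous configuration of l generic i-dimensional subspaces). If l·(i+1) ≤ n+3 then L is feasible, and if l > ⌈(n+3)/(i+1)⌉ then L is non-feasible. -/

import Mathlib

noncomputable section

/-- Projective space `ℙⁿ(ℂ)`, the projectivization of `ℂ^{n+1}`. -/
abbrev PP (k : ℕ) := Projectivization ℂ (Fin (k + 1) → ℂ)

/-- The vector of the monomials `s^k t^(n-k)`, used to parametrize rational normal curves. -/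
def veron (n : ℕ) (v : Fin 2 → ℂ) : Fin (n + 1) → ℂ :=
  fun k => v 0 ^ (k : ℕ) * v 1 ^ (n - (k : ℕ))

/-- `C ⊆ ℙⁿ` is a rational normal curve if it is the image of `[s:t] ↦ [F₀(s,t):⋯:Fₙ(s,t)]`
for a basis `F₀,…,Fₙ` of the degree-`n` binary forms; such a basis is encoded by an
invertible matrix of coefficients applied to the monomial vector `veron`. -/
def IsRNC (n : ℕ) (C : Set (PP n)) : Prop :=
  ∃ M : Matrix (Fin (n + 1)) (Fin (n + 1)) ℂ, IsUnit M.det ∧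
    C = {P : PP n | ∃ v : Fin 2 → ℂ, v ≠ 0 ∧ ∃ c : ℂ, c ≠ 0 ∧
      P.rep = c • M.mulVec (veron n v)}

/-- The linear subspace of `ℙⁿ` given as the projectivization of the column span of a matrix. -/
def projSet {n m : ℕ} (A : Matrix (Fin (n + 1)) (Fin m) ℂ) : Set (PP n) :=
  {P : PP n | P.rep ∈ Submodule.span ℂ (Set.range fun j => fun r => A r j)}

/-- A configuration of weight `L = (l₀,…,l_{n-2})`: for each `i`, `lᵢ` matrices of size
`(n+1) × (i+1)`, whose column spans give the `i`-dimensional components. -/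
abbrev Config (n : ℕ) (L : Fin (n - 1) → ℕ) :=
  (i : Fin (n - 1)) → Fin (L i) → Matrix (Fin (n + 1)) (Fin (i.1 + 1)) ℂ

/-- All matrices of the configuration have full rank. -/
def FullRank {n : ℕ} {L : Fin (n - 1) → ℕ} (A : Config n L) : Prop :=
  ∀ i j, (A i j).rank = i.1 + 1

/-- A curve `C` maximally intersects the configuration `A`: it meets every `i`-dimensional
component in exactly `i+1` distinct points. -/
def MaxIntersects {n : ℕ} {L : Fin (n - 1) → ℕ} (C : Set (PP n)) (A : Config n L) : Prop :=
  ∀ i j, (C ∩ projSet (A i j)).ncard = i.1 + 1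

/-- A property `Q` holds for a generic configuration of weight `L`: there is a nonzero
polynomial in the matrix entries such that `Q` holds at every full-rank tuple of matrices
where the polynomial does not vanish. -/
def GenHolds (n : ℕ) (L : Fin (n - 1) → ℕ) (Q : Config n L → Prop) : Prop :=
  ∃ F : MvPolynomial ((i : Fin (n - 1)) × (Fin (L i) × Fin (n + 1) × Fin (i.1 + 1))) ℂ,
    F ≠ 0 ∧ ∀ A : Config n L, FullRank A →
      MvPolynomial.eval (fun p => A p.1 p.2.1 p.2.2.1 p.2.2.2) F ≠ 0 → Q A

/-- `L` is feasible: a generic configuration of weight `L` is maximally intersected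
by some rational normal curve. -/
def Feasible (n : ℕ) (L : Fin (n - 1) → ℕ) : Prop :=
  GenHolds n L fun A => ∃ C : Set (PP n), IsRNC n C ∧ MaxIntersects C A

/-- `L` is non-feasible: for a generic configuration of weight `L`, no rational normal
curve maximally intersects it. -/
def NonFeasible (n : ℕ) (L : Fin (n - 1) → ℕ) : Prop :=
  GenHolds n L fun A => ¬ ∃ C : Set (PP n), IsRNC n C ∧ MaxIntersects C A


/-- A product of `n` linear forms is a combination of the monomials of degree `n`. -/
lemma exists_coeff (n : ℕ) (f : Fin n → Fin 2 → ℂ) :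
    ∃ c : Fin (n + 1) → ℂ, ∀ v : Fin 2 → ℂ,
      ∑ k, c k * veron n v k = ∏ j, (f j 0 * v 0 + f j 1 * v 1) := by
  induction n with
  | zero => exact ⟨fun _ => 1, fun v => by simp [veron]⟩
  | succ n ih =>
    obtain ⟨c, hc⟩ := ih (fun j => f j.succ)
    refine ⟨fun k => (Fin.cons 0 (fun k => f 0 0 * c k) : Fin (n + 2) → ℂ) k +
      (Fin.snoc (fun k => f 0 1 * c k) 0 : Fin (n + 2) → ℂ) k, fun v => ?_⟩
    rw [Fin.prod_univ_succ, ← hc v]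
    simp only [add_mul, Finset.sum_add_distrib]
    congr 1
    · rw [Fin.sum_univ_succ]
      simp only [Fin.cons_zero, Fin.cons_succ, zero_mul, zero_add, Finset.mul_sum]
      refine Finset.sum_congr rfl fun k _ => ?_
      simp only [veron, Fin.val_succ, pow_succ]
      have : n + 1 - (k.1 + 1) = n - k.1 := by omega
      rw [this]; ring
    · rw [Fin.sum_univ_castSucc]
      simp only [Fin.snoc_castSucc, Fin.snoc_last, zero_mul, add_zero, Finset.mul_sum]
      refine Finset.sum_congr rfl fun k _ => ?_
      simp only [veron, Fin.val_castSucc]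
      have : n + 1 - k.1 = (n - k.1) + 1 := by omega
      rw [this, pow_succ]; ring

lemma veron_smul (n : ℕ) (c : ℂ) (v : Fin 2 → ℂ) : veron n (c • v) = c ^ n • veron n v := by
  ext k
  simp only [veron, Pi.smul_apply, smul_eq_mul, mul_pow]
  have : c ^ n = c ^ (k : ℕ) * c ^ (n - (k : ℕ)) := by
    rw [← pow_add]; congr 1; omega
  rw [this]; ring

lemma exists_smul_of_det {v w : Fin 2 → ℂ} (hv : v ≠ 0) (hw : w ≠ 0)
    (h : v 0 * w 1 - v 1 * w 0 = 0) : ∃ c : ℂ, c ≠ 0 ∧ w = c • v := by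
  have key : ∃ c : ℂ, w = c • v := by
    by_cases h0 : v 0 = 0
    · have h1 : v 1 ≠ 0 := fun h1 => hv (by ext k; fin_cases k <;> simp [h0, h1])
      refine ⟨w 1 / v 1, ?_⟩
      ext k; fin_cases k
      · have : w 0 = 0 := by
          rw [h0] at h; simp at h; tauto
        simp [h0, this]
      · simp [h1]
    · refine ⟨w 0 / v 0, ?_⟩
      ext k; fin_cases k
      · simp [h0]
      · simp; field_simp; linear_combination h
  obtain ⟨c, rfl⟩ := key
  exact ⟨c, fun hc => hw (by simp [hc]), rfl⟩

lemma veron_indep (n : ℕ) {ι : Type} [Fintype ι] (hι : Fintype.card ι ≤ n + 1)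
    (w : ι → Fin 2 → ℂ) (h0 : ∀ k, w k ≠ 0)
    (hw : ∀ k k', k ≠ k' → w k 0 * w k' 1 - w k 1 * w k' 0 ≠ 0) :
    LinearIndependent ℂ (fun k => veron n (w k)) := by
  classical
  rw [Fintype.linearIndependent_iff]
  intro g hg k0
  have hcard : Fintype.card {k // k ≠ k0} ≤ Fintype.card (Fin n) := by
    rw [Fintype.card_subtype_compl]; simp; omega
  obtain ⟨e⟩ := Function.Embedding.nonempty_of_card_le hcard
  obtain ⟨u, hu⟩ : ∃ u : Fin 2 → ℂ, u 0 * w k0 0 + u 1 * w k0 1 ≠ 0 := by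
    by_cases h : w k0 0 = 0
    · refine ⟨![0, 1], ?_⟩
      intro h1
      apply h0 k0
      ext k; fin_cases k
      · simpa using h
      · simpa using h1
    · exact ⟨![1, 0], by simpa using h⟩
  obtain ⟨c, hc⟩ := exists_coeff n
    (Function.extend e (fun k => ![- w k.1 1, w k.1 0]) (fun _ => u))
  have hz : ∀ k, k ≠ k0 → ∑ m, c m * veron n (w k) m = 0 := by
    intro k hk
    rw [hc]
    refine Finset.prod_eq_zero (Finset.mem_univ (e ⟨k, hk⟩)) ?_
    rw [e.injective.extend_apply]
    simp; ring
  have hnz : ∑ m, c m * veron n (w k0) m ≠ 0 := by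
    rw [hc]
    refine Finset.prod_ne_zero_iff.mpr fun j _ => ?_
    by_cases hj : ∃ k, e k = j
    · obtain ⟨k, rfl⟩ := hj
      rw [e.injective.extend_apply]
      have := hw k.1 k0 k.2
      intro h; apply this
      simp at h; linear_combination h
    · rw [Function.extend_apply' _ _ _ hj]
      exact hu
  have h1 : ∑ m, c m * (∑ k, g k • veron n (w k)) m = 0 := by
    rw [hg]; simp
  have h2 : ∑ k, g k * ∑ m, c m * veron n (w k) m = 0 := by
    rw [← h1]
    simp only [Finset.sum_apply, Pi.smul_apply, smul_eq_mul, Finset.mul_sum]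
    rw [Finset.sum_comm]
    refine Finset.sum_congr rfl fun _ _ => Finset.sum_congr rfl fun _ _ => by ring
  rw [Finset.sum_eq_single k0 (fun k _ hk => by rw [hz k hk, mul_zero]) (by simp)] at h2
  exact (mul_eq_zero.mp h2).resolve_right hnz

/-- The symmetric power of a `2 × 2` matrix. -/
lemma exists_sym (n : ℕ) (g : Matrix (Fin 2) (Fin 2) ℂ) :
    ∃ S : Matrix (Fin (n + 1)) (Fin (n + 1)) ℂ, ∀ v, veron n (g.mulVec v) = S.mulVec (veron n v) := by
  have h : ∀ k : Fin (n + 1), ∃ c : Fin (n + 1) → ℂ, ∀ v : Fin 2 → ℂ,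
      ∑ m, c m * veron n v m = veron n (g.mulVec v) k := by
    intro k
    obtain ⟨c, hc⟩ := exists_coeff n (fun j => if j.1 < k.1 then g 0 else g 1)
    refine ⟨c, fun v => ?_⟩
    rw [hc]
    have : ∀ j : Fin n, ((if j.1 < k.1 then g 0 else g 1) 0 * v 0 +
        (if j.1 < k.1 then g 0 else g 1) 1 * v 1) =
        (fun j : ℕ => if j < k.1 then g.mulVec v 0 else g.mulVec v 1) j.1 := by
      intro j
      simp only [Matrix.mulVec, dotProduct, Fin.sum_univ_two]
      split_ifs <;> rfl
    rw [Finset.prod_congr rfl fun j _ => this j,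
      Fin.prod_univ_eq_prod_range (fun j : ℕ => if j < k.1 then g.mulVec v 0 else g.mulVec v 1) n]
    obtain ⟨d, hd⟩ : ∃ d, n = k.1 + d := ⟨n - k.1, by omega⟩
    simp only [veron]
    have hd' : n - k.1 = d := by omega
    rw [hd']
    generalize k.1 = k at *
    subst hd
    rw [Finset.prod_range_add]
    congr 1
    · rw [Finset.prod_congr rfl (g := fun _ => g.mulVec v 0)]
      · simp
      · intro x hx; simp at hx; simp [hx]
    · simp
  choose c hc using h
  refine ⟨c, fun v => ?_⟩
  ext k
  rw [← hc k v]; rfl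

/-- Membership in the curve. -/
def curve (n : ℕ) (M : Matrix (Fin (n + 1)) (Fin (n + 1)) ℂ) : Set (PP n) :=
  {P : PP n | ∃ v : Fin 2 → ℂ, v ≠ 0 ∧ ∃ c : ℂ, c ≠ 0 ∧ P.rep = c • M.mulVec (veron n v)}

lemma mulVec_indep {n : ℕ} {M : Matrix (Fin (n + 1)) (Fin (n + 1)) ℂ} (hM : IsUnit M.det)
    {ι : Type} {x : ι → Fin (n + 1) → ℂ} (hx : LinearIndependent ℂ x) :
    LinearIndependent ℂ (fun k => M.mulVec (x k)) := by
  have hinj : Function.Injective M.mulVec := Matrix.mulVec_injective_of_isUnit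
    ((Matrix.isUnit_iff_isUnit_det M).mpr hM)
  have := hx.map' (Matrix.mulVecLin M) (LinearMap.ker_eq_bot.mpr hinj)
  exact this

lemma curve_indep {n : ℕ} {M : Matrix (Fin (n + 1)) (Fin (n + 1)) ℂ} (hM : IsUnit M.det)
    {ι : Type} [Fintype ι] (hι : Fintype.card ι ≤ n + 1) (P : ι → PP n)
    (hP : Function.Injective P) (hC : ∀ k, P k ∈ curve n M) :
    LinearIndependent ℂ (fun k => (P k).rep) := by
  choose v hv c hc hr using hC
  have h1 : LinearIndependent ℂ (fun k => veron n (v k)) := by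
    refine veron_indep n hι v hv fun k k' hkk' h => hkk' (hP ?_)
    obtain ⟨d, hd, hd'⟩ := exists_smul_of_det (hv k) (hv k') h
    rw [← (P k).mk_rep, ← (P k').mk_rep, Projectivization.mk_eq_mk_iff']
    refine ⟨c k * (c k')⁻¹ * (d ^ n)⁻¹, ?_⟩
    rw [hr k, hr k', hd', veron_smul, Matrix.mulVec_smul, smul_smul, smul_smul]
    congr 1
    have := hc k'
    have : d ^ n ≠ 0 := pow_ne_zero _ hd
    field_simp
  have h2 := (mulVec_indep hM h1).units_smul (fun k => Units.mk0 (c k) (hc k))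
  convert h2 using 1
  ext1 k
  rw [hr k]; rfl

lemma mem_projSet_mk {n m : ℕ} (A : Matrix (Fin (n + 1)) (Fin m) ℂ) (x : Fin (n + 1) → ℂ)
    (hx : x ≠ 0) (h : x ∈ Submodule.span ℂ (Set.range fun j => fun r => A r j)) :
    Projectivization.mk ℂ x hx ∈ projSet A := by
  obtain ⟨a, ha⟩ := Projectivization.exists_smul_eq_mk_rep ℂ x hx
  show _ ∈ _
  rw [projSet, Set.mem_ofPred_eq, ← ha]
  exact Submodule.smul_mem _ (a : ℂ) h

lemma mem_curve_mk {n : ℕ} (M : Matrix (Fin (n + 1)) (Fin (n + 1)) ℂ) (x : Fin (n + 1) → ℂ)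
    (hx : x ≠ 0) (h : ∃ v : Fin 2 → ℂ, v ≠ 0 ∧ ∃ c : ℂ, c ≠ 0 ∧ x = c • M.mulVec (veron n v)) :
    Projectivization.mk ℂ x hx ∈ curve n M := by
  obtain ⟨a, ha⟩ := Projectivization.exists_smul_eq_mk_rep ℂ x hx
  obtain ⟨v, hv, c, hc, rfl⟩ := h
  refine ⟨v, hv, a * c, mul_ne_zero a.ne_zero hc, ?_⟩
  rw [← ha, mul_smul]; rfl

/-- points of a curve in a linear subspace : at most `i+1` of them. -/
lemma card_le {n i : ℕ} {M : Matrix (Fin (n + 1)) (Fin (n + 1)) ℂ} (hM : IsUnit M.det)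
    (A : Matrix (Fin (n + 1)) (Fin (i + 1)) ℂ) (T : Finset (PP n)) (hT : T.card ≤ n + 1)
    (h : ∀ P ∈ T, P ∈ curve n M ∩ projSet A) : T.card ≤ i + 1 := by
  let e : Fin T.card ≃ T := T.equivFin.symm
  have h1 := curve_indep hM (ι := Fin T.card) (by simpa using hT) (fun k => (e k).1)
    (Subtype.val_injective.comp e.injective) (fun k => (h _ (e k).2).1)
  have h2 := finrank_span_eq_card h1
  have h3 : Submodule.span ℂ (Set.range fun k => (e k).1.rep) ≤
      Submodule.span ℂ (Set.range fun j => fun r => A r j) := by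
    rw [Submodule.span_le]
    rintro _ ⟨k, rfl⟩
    exact (h _ (e k).2).2
  have h4 := Submodule.finrank_mono h3
  have h5 := finrank_range_le_card (R := ℂ) (fun j => fun r => A r j)
  rw [Set.finrank] at h5
  simp at h2 h5
  omega

lemma ncard_eq {n i : ℕ} (hin : i + 2 ≤ n + 1) {M : Matrix (Fin (n + 1)) (Fin (n + 1)) ℂ}
    (hM : IsUnit M.det) (A : Matrix (Fin (n + 1)) (Fin (i + 1)) ℂ) (hA : A.rank = i + 1)
    (h : ∀ t, ∃ v : Fin 2 → ℂ, v ≠ 0 ∧ ∃ c : ℂ, c ≠ 0 ∧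
      (fun r => A r t) = c • M.mulVec (veron n v)) :
    (curve n M ∩ projSet A).ncard = i + 1 := by
  classical
  have hli : LinearIndependent ℂ (fun t => fun r => A r t) := by
    rw [linearIndependent_iff_card_eq_finrank_span]
    rw [Matrix.rank_eq_finrank_span_cols] at hA
    simp only [Fintype.card_fin]
    exact hA.symm
  let P : Fin (i + 1) → PP n := fun t => Projectivization.mk ℂ (fun r => A r t) (hli.ne_zero t)
  have hPinj : Function.Injective P := by
    intro s t hst
    by_contra hne
    rw [Projectivization.mk_eq_mk_iff'] at hst
    obtain ⟨a, ha⟩ := hst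
    refine hli.notMem_span_image (s := {t}) (x := s) (by simpa using hne) ?_
    rw [Set.image_singleton, Submodule.mem_span_singleton]
    exact ⟨a, ha⟩
  have hmem : ∀ t, P t ∈ curve n M ∩ projSet A := fun t =>
    ⟨mem_curve_mk M _ _ (h t), mem_projSet_mk A _ _ (Submodule.subset_span ⟨t, rfl⟩)⟩
  have hS : curve n M ∩ projSet A = ↑(Finset.univ.image P) := by
    apply Set.Subset.antisymm
    · intro Q hQ
      by_contra hQn
      have hQn' : Q ∉ Finset.univ.image P := hQn
      have hc : (insert Q (Finset.univ.image P)).card = i + 2 := by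
        rw [Finset.card_insert_of_notMem hQn', Finset.card_image_of_injective _ hPinj]; simp
      have := card_le hM A (insert Q (Finset.univ.image P)) (by omega) (by
        intro R hR
        rw [Finset.mem_insert] at hR
        rcases hR with rfl | hR
        · exact hQ
        · obtain ⟨t, _, rfl⟩ := Finset.mem_image.mp hR
          exact hmem t)
      omega
    · intro Q hQ
      obtain ⟨t, _, rfl⟩ := Finset.mem_image.mp hQ
      exact hmem t
  rw [hS, Set.ncard_coe_finset, Finset.card_image_of_injective _ hPinj]; simp

/-- A rational normal curve through `n+3` points in linearly general position. -/
lemma exists_rnc (n : ℕ) (x : Fin (n + 1) ⊕ Bool → Fin (n + 1) → ℂ)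
    (H : ∀ c : Fin (n + 1) ⊕ Bool → ℂ, ∑ m, c m • x m = 0 →
      ∀ m1 m2, m1 ≠ m2 → c m1 = 0 → c m2 = 0 → c = 0) :
    ∃ M : Matrix (Fin (n + 1)) (Fin (n + 1)) ℂ, IsUnit M.det ∧
      ∀ m, ∃ v : Fin 2 → ℂ, v ≠ 0 ∧ ∃ c : ℂ, c ≠ 0 ∧ x m = c • M.mulVec (veron n v) := by
  classical
  have H' : ∀ (c : Fin (n + 1) → ℂ) (p q : ℂ),
      ∑ k, c k • x (Sum.inl k) + p • x (Sum.inr true) + q • x (Sum.inr false) = 0 →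
      ∀ m1 m2 : Fin (n + 1) ⊕ Bool, m1 ≠ m2 → (Sum.elim c (fun b : Bool => if b then p else q)) m1 = 0 →
        (Sum.elim c (fun b : Bool => if b then p else q)) m2 = 0 → c = 0 ∧ p = 0 ∧ q = 0 := by
    intro c p q h m1 m2 hm h1 h2
    have := H (Sum.elim c (fun b : Bool => if b then p else q)) (by
      rw [Fintype.sum_sum_type, Fintype.sum_bool]
      simpa [add_assoc] using h) m1 m2 hm h1 h2
    refine ⟨?_, ?_, ?_⟩
    · ext k; exact congrFun this (Sum.inl k)
    · exact congrFun this (Sum.inr true)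
    · exact congrFun this (Sum.inr false)
  let B : Matrix (Fin (n + 1)) (Fin (n + 1)) ℂ := Matrix.of fun r k => x (Sum.inl k) r
  have hBmul : ∀ c : Fin (n + 1) → ℂ, B.mulVec c = ∑ k, c k • x (Sum.inl k) := by
    intro c; ext r
    simp [Matrix.mulVec, dotProduct, B, mul_comm]
  have hBu : IsUnit B := by
    rw [← Matrix.linearIndependent_cols_iff_isUnit, Fintype.linearIndependent_iff]
    intro g hg
    have hg' : ∑ k, g k • x (Sum.inl k) = 0 := hg
    have := H' g 0 0 (by simpa using hg') (Sum.inr true) (Sum.inr false) (by simp) (by simp) (by simp)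
    exact fun k => congrFun this.1 k
  have hBd : IsUnit B.det := (Matrix.isUnit_iff_isUnit_det B).mp hBu
  have hsol : ∀ y, ∃ a, B.mulVec a = y := fun y =>
    ⟨B⁻¹.mulVec y, by rw [Matrix.mulVec_mulVec, Matrix.mul_nonsing_inv _ hBd, Matrix.one_mulVec]⟩
  obtain ⟨a, ha⟩ := hsol (x (Sum.inr true))
  obtain ⟨b, hb⟩ := hsol (x (Sum.inr false))
  have ha0 : ∀ k, a k ≠ 0 := by
    intro k hk
    have := H' a (-1) 0 (by rw [← hBmul, ha]; simp) (Sum.inl k) (Sum.inr false) (by simp)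
      (by simpa using hk) (by simp)
    simp at this
  have hb0 : ∀ k, b k ≠ 0 := by
    intro k hk
    have := H' b 0 (-1) (by rw [← hBmul, hb]; simp) (Sum.inl k) (Sum.inr true) (by simp)
      (by simpa using hk) (by simp)
    simp at this
  have hab : ∀ j k, j ≠ k → a j * b k - a k * b j ≠ 0 := by
    intro j k hjk h
    have := H' (b k • a - a k • b) (- b k) (a k) (by
      rw [← hBmul, Matrix.mulVec_sub, Matrix.mulVec_smul, Matrix.mulVec_smul, ha, hb]
      module) (Sum.inl j) (Sum.inl k) (by simpa using hjk)
      (by simp; linear_combination h) (by simp; ring)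
    exact ha0 k this.2.2
  have hF : ∀ k : Fin (n + 1), ∃ c : Fin (n + 1) → ℂ, ∀ v : Fin 2 → ℂ,
      ∑ m, c m * veron n v m = ∏ j, ((a (k.succAbove j))⁻¹ * v 0 + (- (b (k.succAbove j))⁻¹) * v 1) := by
    intro k
    obtain ⟨c, hc⟩ := exists_coeff n (fun j => ![(a (k.succAbove j))⁻¹, - (b (k.succAbove j))⁻¹])
    exact ⟨c, fun v => by rw [hc]; simp⟩
  choose c hc using hF
  let N : Matrix (Fin (n + 1)) (Fin (n + 1)) ℂ := Matrix.of c
  have hN : ∀ v k, N.mulVec (veron n v) k =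
      ∏ j, ((a (k.succAbove j))⁻¹ * v 0 + (- (b (k.succAbove j))⁻¹) * v 1) := by
    intro v k; rw [← hc k v]; rfl
  have hoff : ∀ j k, k ≠ j → N.mulVec (veron n ![a j, b j]) k = 0 := by
    intro j k hkj
    rw [hN]
    obtain ⟨z, hz⟩ := Fin.exists_succAbove_eq hkj.symm
    refine Finset.prod_eq_zero (Finset.mem_univ z) ?_
    rw [hz]
    simp [ha0 j, hb0 j]
  have hon : ∀ j, N.mulVec (veron n ![a j, b j]) j ≠ 0 := by
    intro j
    rw [hN]
    refine Finset.prod_ne_zero_iff.mpr fun z _ => ?_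
    have h1 := hab j (j.succAbove z) (Fin.succAbove_ne j z).symm
    have h2 := ha0 (j.succAbove z)
    have h3 := hb0 (j.succAbove z)
    simp only [Matrix.cons_val_zero, Matrix.cons_val_one]
    intro h
    apply h1
    field_simp at h
    linear_combination h
  let V : Matrix (Fin (n + 1)) (Fin (n + 1)) ℂ := Matrix.of fun m j => veron n ![a j, b j] m
  have hNV : N * V = Matrix.diagonal (fun j => N.mulVec (veron n ![a j, b j]) j) := by
    ext k j
    have : (N * V) k j = N.mulVec (veron n ![a j, b j]) k := rfl
    rw [this]
    by_cases hkj : k = j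
    · subst hkj; simp
    · rw [Matrix.diagonal_apply_ne _ hkj, hoff j k hkj]
  have hNd : N.det ≠ 0 := by
    have h1 : (N * V).det ≠ 0 := by
      rw [hNV, Matrix.det_diagonal]
      exact Finset.prod_ne_zero_iff.mpr fun j _ => hon j
    rw [Matrix.det_mul] at h1
    exact left_ne_zero_of_mul h1
  refine ⟨B * N, by rw [Matrix.det_mul]; exact hBd.mul (isUnit_iff_ne_zero.mpr hNd), ?_⟩
  simp only [← Matrix.mulVec_mulVec]
  rintro (j | bb)
  · refine ⟨![a j, b j], fun h => ha0 j (by simpa using congrFun h 0),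
      (N.mulVec (veron n ![a j, b j]) j)⁻¹, inv_ne_zero (hon j), ?_⟩
    rw [hBmul, Finset.sum_eq_single j (fun k _ hk => by rw [hoff j k hk, zero_smul]) (by simp),
      smul_smul, inv_mul_cancel₀ (hon j), one_smul]
  · cases bb
    · have hpr : (∏ k, (-(b k)⁻¹)) ≠ 0 :=
        Finset.prod_ne_zero_iff.mpr fun k _ => neg_ne_zero.mpr (inv_ne_zero (hb0 k))
      refine ⟨![0, 1], fun h => by simpa using congrFun h 1, (- ∏ k, (-(b k)⁻¹))⁻¹, inv_ne_zero (neg_ne_zero.mpr hpr), ?_⟩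
      have : N.mulVec (veron n ![0, 1]) = (- ∏ k, (-(b k)⁻¹)) • b := by
        ext k
        rw [hN, Pi.smul_apply, Fin.prod_univ_succAbove _ k]
        have := hb0 k
        simp only [Matrix.cons_val_zero, Matrix.cons_val_one, smul_eq_mul, mul_zero, zero_add, mul_one]
        field_simp
      rw [this, Matrix.mulVec_smul, hb, smul_smul, inv_mul_cancel₀ (neg_ne_zero.mpr hpr), one_smul]
    · have hpr : (∏ k, ((a k)⁻¹)) ≠ 0 :=
        Finset.prod_ne_zero_iff.mpr fun k _ => (inv_ne_zero (ha0 k))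
      refine ⟨![1, 0], fun h => by simpa using congrFun h 0, (∏ k, ((a k)⁻¹))⁻¹, inv_ne_zero hpr, ?_⟩
      have : N.mulVec (veron n ![1, 0]) = (∏ k, ((a k)⁻¹)) • a := by
        ext k
        rw [hN, Pi.smul_apply, Fin.prod_univ_succAbove _ k]
        have := ha0 k
        simp only [Matrix.cons_val_zero, Matrix.cons_val_one, smul_eq_mul, mul_zero, add_zero, mul_one]
        field_simp
      rw [this, Matrix.mulVec_smul, ha, smul_smul, inv_mul_cancel₀ hpr, one_smul]

lemma feasible_core (n i l : ℕ) (hin : i + 2 ≤ n + 1) (hl : l * (i + 1) ≤ n + 3) :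
    ∃ F : MvPolynomial (Fin l × Fin (n + 1) × Fin (i + 1)) ℂ, F ≠ 0 ∧
      ∀ A : Fin l → Matrix (Fin (n + 1)) (Fin (i + 1)) ℂ, (∀ j, (A j).rank = i + 1) →
        MvPolynomial.eval (fun p => A p.1 p.2.1 p.2.2) F ≠ 0 →
        ∃ C : Set (PP n), IsRNC n C ∧ ∀ j, (C ∩ projSet (A j)).ncard = i + 1 := by
  classical
  obtain ⟨e⟩ : Nonempty (Fin l × Fin (i + 1) ↪ Fin (n + 1) ⊕ Bool) :=
    Function.Embedding.nonempty_of_card_le (by simp; omega)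
  let th : Fin (n + 1) ⊕ Bool → ℂ := fun m => ((Fintype.equivFin _ m).1 : ℂ)
  have hth : Function.Injective th := by
    intro m m' h
    have : (Fintype.equivFin _ m).1 = (Fintype.equivFin _ m').1 := Nat.cast_injective (R := ℂ) h
    exact (Fintype.equivFin _).injective (Fin.ext this)
  let w : Fin (n + 1) ⊕ Bool → Fin 2 → ℂ := fun m => ![th m, 1]
  let Y : Fin (n + 1) ⊕ Bool → Fin (n + 1) → MvPolynomial (Fin l × Fin (n + 1) × Fin (i + 1)) ℂ :=
    Function.extend e (fun κ r => MvPolynomial.X (κ.1, r, κ.2))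
      (fun m r => MvPolynomial.C (veron n (w m) r))
  let y : (Fin l → Matrix (Fin (n + 1)) (Fin (i + 1)) ℂ) → Fin (n + 1) ⊕ Bool → Fin (n + 1) → ℂ :=
    fun A => Function.extend e (fun κ r => A κ.1 r κ.2) (fun m r => veron n (w m) r)
  have hYy : ∀ A m r, MvPolynomial.eval (fun p => A p.1 p.2.1 p.2.2) (Y m r) = y A m r := by
    intro A m r
    by_cases hm : ∃ κ, e κ = m
    · obtain ⟨κ, rfl⟩ := hm
      simp only [Y, y, e.injective.extend_apply, MvPolynomial.eval_X]
    · simp only [Y, y, Function.extend_apply' _ _ _ hm, MvPolynomial.eval_C]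
  let F : MvPolynomial (Fin l × Fin (n + 1) × Fin (i + 1)) ℂ :=
    ∏ g : Fin (n + 1) ↪ Fin (n + 1) ⊕ Bool, (Matrix.of fun r k => Y (g k) r).det
  have hF : ∀ A, MvPolynomial.eval (fun p => A p.1 p.2.1 p.2.2) F =
      ∏ g : Fin (n + 1) ↪ Fin (n + 1) ⊕ Bool, (Matrix.of fun r k => y A (g k) r).det := by
    intro A
    simp only [F, map_prod, RingHom.map_det]
    refine Finset.prod_congr rfl fun g _ => ?_
    congr 1
    ext r k
    simp [hYy]
  have hdet : ∀ A (g : Fin (n + 1) ↪ Fin (n + 1) ⊕ Bool),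
      (Matrix.of fun r k => y A (g k) r).det ≠ 0 ↔ LinearIndependent ℂ (fun k => y A (g k)) := by
    intro A g
    rw [← isUnit_iff_ne_zero, ← Matrix.isUnit_iff_isUnit_det,
      ← Matrix.linearIndependent_cols_iff_isUnit]
    rfl
  refine ⟨F, ?_, ?_⟩
  · intro h0
    let A0 : Fin l → Matrix (Fin (n + 1)) (Fin (i + 1)) ℂ :=
      fun j => Matrix.of fun r t => veron n (w (e (j, t))) r
    have h1 := hF A0
    rw [h0, map_zero] at h1
    refine Finset.prod_ne_zero_iff.mpr (fun g _ => ?_) h1.symm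
    refine (hdet A0 g).mpr ?_
    have : (fun k => y A0 (g k)) =
        fun k => veron n (w (g k)) := by
      ext k r
      by_cases hm : ∃ κ, e κ = g k
      · obtain ⟨κ, hκ⟩ := hm
        rw [← hκ]
        simp only [y, e.injective.extend_apply, A0, Matrix.of_apply]
      · simp only [y, Function.extend_apply' _ _ _ hm]
    rw [this]
    refine veron_indep n (by simp) _ (fun k h => by simpa [w] using congrFun h 1) ?_
    intro k k' hk h
    apply hk
    apply g.injective
    apply hth
    simp [w] at h
    linear_combination h
  · intro A hA hne
    rw [hF, Finset.prod_ne_zero_iff] at hne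
    obtain ⟨M, hM, hx⟩ := exists_rnc n (y A) (by
      intro c hc m1 m2 hm h1 h2
      have hcard : Fintype.card {m // m ∉ ({m1, m2} : Finset (Fin (n + 1) ⊕ Bool))} = n + 1 := by
        rw [Fintype.card_of_subtype ({m1, m2}ᶜ : Finset (Fin (n + 1) ⊕ Bool)) (by simp),
          Finset.card_compl, Finset.card_pair hm]
        simp
      let g := (Fintype.equivFinOfCardEq hcard).symm
      have hli := (hdet A (g.toEmbedding.trans (Function.Embedding.subtype _))).mp
        (hne _ (Finset.mem_univ _))
      rw [Fintype.linearIndependent_iff] at hli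
      have hs : ∑ k, c (g k).1 • y A (g k).1 = 0 := by
        rw [← hc]
        refine Fintype.sum_of_injective (fun k => (g k).1)
          (Subtype.val_injective.comp g.injective) _ _ ?_ (fun _ => rfl)
        intro m hmr
        have hm' : m ∈ ({m1, m2} : Finset (Fin (n + 1) ⊕ Bool)) := by
          by_contra hm'
          exact hmr ⟨g.symm ⟨m, hm'⟩, by simp⟩
        simp only [Finset.mem_insert, Finset.mem_singleton] at hm'
        rcases hm' with rfl | rfl
        · rw [h1, zero_smul]
        · rw [h2, zero_smul]
      have hz := hli (fun k => c (g k).1) hs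
      ext m
      by_cases hm' : m ∈ ({m1, m2} : Finset (Fin (n + 1) ⊕ Bool))
      · simp at hm'
        rcases hm' with rfl | rfl
        · exact h1
        · exact h2
      · have := hz (g.symm ⟨m, hm'⟩)
        simpa using this)
    refine ⟨curve n M, ⟨M, hM, rfl⟩, fun j => ncard_eq hin hM (A j) (hA j) fun t => ?_⟩
    have := hx (e (j, t))
    simp only [y, e.injective.extend_apply] at this
    exact this

lemma exists_relation {σ τ : Type} [Fintype σ] [Fintype τ] (h : Fintype.card σ < Fintype.card τ)
    (φ : τ → MvPolynomial σ ℂ) :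
    ∃ F : MvPolynomial τ ℂ, F ≠ 0 ∧ MvPolynomial.aeval φ F = 0 := by
  by_contra hcon
  push Not at hcon
  have hind : AlgebraicIndependent ℂ φ := by
    rw [algebraicIndependent_iff]
    intro p hp
    by_contra hp0
    exact hcon p hp0 hp
  have h1 := hind.cardinalMk_le_trdeg
  rw [MvPolynomial.trdeg_of_isDomain] at h1
  simp at h1
  omega

lemma normalize_pts {K : Type} [DecidableEq K] (v : K → Fin 2 → ℂ) (k1 k2 k3 : K)
    (h12 : v k1 0 * v k2 1 - v k1 1 * v k2 0 ≠ 0) (h13 : v k1 0 * v k3 1 - v k1 1 * v k3 0 ≠ 0)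
    (h23 : v k2 0 * v k3 1 - v k2 1 * v k3 0 ≠ 0) :
    ∃ (g : Matrix (Fin 2) (Fin 2) ℂ) (s : K → ℂ) (ε : K → Bool) (c : K → ℂ),
      (∀ k, v k = c k • g.mulVec ![s k, if ε k then 1 else 0]) ∧
      s k1 = 1 ∧ s k2 = 0 ∧ s k3 = 1 := by
  set d := v k1 0 * v k2 1 - v k1 1 * v k2 0 with hd
  set x := (v k3 0 * v k2 1 - v k3 1 * v k2 0) / d with hx
  set y := (v k1 0 * v k3 1 - v k1 1 * v k3 0) / d with hy
  have hx0 : x ≠ 0 := div_ne_zero (fun h => h23 (by linear_combination -h)) h12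
  have hy0 : y ≠ 0 := div_ne_zero h13 h12
  have hxd : x * d = (v k3 0 * v k2 1 - v k3 1 * v k2 0) := by rw [hx]; field_simp
  have hyd : y * d = (v k1 0 * v k3 1 - v k1 1 * v k3 0) := by rw [hy]; field_simp
  let g : Matrix (Fin 2) (Fin 2) ℂ := !![x * v k1 0, y * v k2 0; x * v k1 1, y * v k2 1]
  have hg : IsUnit g.det := by
    rw [isUnit_iff_ne_zero, Matrix.det_fin_two_of]
    have : x * v k1 0 * (y * v k2 1) - y * v k2 0 * (x * v k1 1) = x * y * d := by rw [hd]; ring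
    rw [this]
    exact mul_ne_zero (mul_ne_zero hx0 hy0) h12
  have key : ∀ k, ∃ (s : ℂ) (ε : Bool) (c : ℂ), v k = c • g.mulVec ![s, if ε then 1 else 0] ∧
      (k = k1 → s = 1) ∧ (k = k2 → s = 0) ∧ (k = k3 → s = 1) := by
    have n12 : k1 ≠ k2 := by rintro rfl; exact h12 (by rw [hd]; ring)
    have n13 : k1 ≠ k3 := by rintro rfl; exact h13 (by ring)
    have n23 : k2 ≠ k3 := by rintro rfl; exact h23 (by ring)
    intro k
    by_cases e1 : k = k1
    · subst e1
      refine ⟨1, false, x⁻¹, ?_, by simp, by simp [n12], by simp⟩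
      ext r; fin_cases r <;> simp [g, hx0]
    by_cases e2 : k = k2
    · subst e2
      refine ⟨0, true, y⁻¹, ?_, by simp [e1], by simp, by simp [n23]⟩
      ext r; fin_cases r <;> simp [g, hy0]
    by_cases e3 : k = k3
    · subst e3
      refine ⟨1, true, 1, ?_, by simp, by simp [e2], by simp⟩
      ext r; fin_cases r
      · simp [g]
        apply mul_right_cancel₀ h12
        linear_combination (-v k1 0) * hxd - v k2 0 * hyd + v k 0 * hd
      · simp [g]
        apply mul_right_cancel₀ h12
        linear_combination (-v k1 1) * hxd - v k2 1 * hyd + v k 1 * hd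
    · have hu : g.mulVec (g⁻¹.mulVec (v k)) = v k := by
        rw [Matrix.mulVec_mulVec, Matrix.mul_nonsing_inv _ hg, Matrix.one_mulVec]
      set u := g⁻¹.mulVec (v k)
      by_cases hu1 : u 1 = 0
      · refine ⟨u 0, false, 1, ?_, by simp [e1], by simp [e2], by simp [e3]⟩
        rw [one_smul]
        have : (![u 0, if false then 1 else 0] : Fin 2 → ℂ) = u := by
          ext r; fin_cases r <;> simp [hu1]
        rw [this, hu]
      · refine ⟨u 0 / u 1, true, u 1, ?_, by simp [e1], by simp [e2], by simp [e3]⟩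
        rw [← Matrix.mulVec_smul]
        have : u 1 • (![u 0 / u 1, if true then 1 else 0] : Fin 2 → ℂ) = u := by
          ext r; fin_cases r <;> simp; field_simp
        rw [this, hu]
  choose s ε c h a1 a2 a3 using key
  exact ⟨g, s, ε, c, h, a1 _ rfl, a2 _ rfl, a3 _ rfl⟩

/-- The spanning points of a maximally intersected subspace. -/
lemma exists_points {n i : ℕ} (hin : i + 1 ≤ n + 1) {M : Matrix (Fin (n + 1)) (Fin (n + 1)) ℂ}
    (hM : IsUnit M.det) (A : Matrix (Fin (n + 1)) (Fin (i + 1)) ℂ)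
    (h : (curve n M ∩ projSet A).ncard = i + 1) :
    ∃ (v : Fin (i + 1) → Fin 2 → ℂ) (G : Fin (i + 1) → Fin (i + 1) → ℂ),
      (∀ s, v s ≠ 0) ∧
      (∀ s, M.mulVec (veron n (v s)) ∈ Submodule.span ℂ (Set.range fun j => fun r => A r j)) ∧
      ∀ r t, A r t = ∑ s, M.mulVec (veron n (v s)) r * G s t := by
  have hfin : (curve n M ∩ projSet A).Finite := Set.finite_of_ncard_ne_zero (by omega)
  rw [Set.ncard_eq_toFinset_card _ hfin] at h
  let e : Fin (i + 1) ≃ hfin.toFinset := (Finset.equivFinOfCardEq h).symm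
  have hmem : ∀ k, (e k).1 ∈ curve n M ∩ projSet A := fun k => hfin.mem_toFinset.mp (e k).2
  have hli := curve_indep hM (ι := Fin (i + 1)) (by simpa using hin) (fun k => (e k).1)
    (Subtype.val_injective.comp e.injective) (fun k => (hmem k).1)
  have h3 : Submodule.span ℂ (Set.range fun k => (e k).1.rep) ≤
      Submodule.span ℂ (Set.range fun j => fun r => A r j) := by
    rw [Submodule.span_le]
    rintro _ ⟨k, rfl⟩
    exact (hmem k).2
  have h2 := finrank_span_eq_card hli
  have h5 := finrank_range_le_card (R := ℂ) (fun j => fun r => A r j)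
  rw [Set.finrank] at h5
  have h6 := Submodule.eq_of_le_of_finrank_le h3 (by rw [h2]; exact h5)
  choose v hv c hc hr using fun k => (hmem k).1
  have h7 : ∀ t, ∃ G : Fin (i + 1) → ℂ, ∑ s, G s • (e s).1.rep = fun r => A r t := by
    intro t
    rw [← Submodule.mem_span_range_iff_exists_fun, h6]
    exact Submodule.subset_span ⟨t, rfl⟩
  choose G hG using h7
  refine ⟨v, fun s t => c s * G t s, hv, fun s => ?_, fun r t => ?_⟩
  · have : M.mulVec (veron n (v s)) = (c s)⁻¹ • (e s).1.rep := by
      rw [hr s, smul_smul, inv_mul_cancel₀ (hc s), one_smul]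
    rw [this]
    exact Submodule.smul_mem _ _ (hmem s).2
  · rw [← congrFun (hG t) r, Finset.sum_apply]
    refine Finset.sum_congr rfl fun s _ => ?_
    rw [hr s]
    simp only [Pi.smul_apply, smul_eq_mul]
    ring

lemma gen_poly (n i l : ℕ) (f : Fin 3 ↪ Fin l) (h : 3 * (i + 1) ≤ n + 1) :
    ∃ F : MvPolynomial (Fin l × Fin (n + 1) × Fin (i + 1)) ℂ, F ≠ 0 ∧
      ∀ A : Fin l → Matrix (Fin (n + 1)) (Fin (i + 1)) ℂ,
        MvPolynomial.eval (fun p => A p.1 p.2.1 p.2.2) F ≠ 0 →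
        LinearIndependent ℂ (fun p : Fin 3 × Fin (i + 1) => fun r => A (f p.1) r p.2) := by
  classical
  obtain ⟨e⟩ : Nonempty (Fin 3 × Fin (i + 1) ↪ Fin (n + 1)) :=
    Function.Embedding.nonempty_of_card_le (by simp; omega)
  let F : MvPolynomial (Fin l × Fin (n + 1) × Fin (i + 1)) ℂ :=
    (Matrix.of fun (q p : Fin 3 × Fin (i + 1)) => MvPolynomial.X (f p.1, e q, p.2)).det
  have hF : ∀ A : Fin l → Matrix (Fin (n + 1)) (Fin (i + 1)) ℂ,
      MvPolynomial.eval (fun p => A p.1 p.2.1 p.2.2) F =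
      (Matrix.of fun (q p : Fin 3 × Fin (i + 1)) => A (f p.1) (e q) p.2).det := by
    intro A
    simp only [F, RingHom.map_det]
    congr 1
    ext r k
    simp
  refine ⟨F, ?_, ?_⟩
  · intro h0
    let A0 : Fin l → Matrix (Fin (n + 1)) (Fin (i + 1)) ℂ :=
      fun j => Matrix.of fun r t => if ∃ a, f a = j ∧ e (a, t) = r then 1 else 0
    have h1 := hF A0
    rw [h0, map_zero] at h1
    have : (Matrix.of fun (q p : Fin 3 × Fin (i + 1)) => A0 (f p.1) (e q) p.2) = 1 := by
      ext q p
      simp only [A0, Matrix.of_apply, Matrix.one_apply]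
      refine if_congr ?_ rfl rfl
      constructor
      · rintro ⟨a, ha, ha'⟩
        have := f.injective ha
        subst this
        exact (e.injective ha').symm
      · rintro rfl
        exact ⟨q.1, rfl, rfl⟩
    rw [this] at h1
    simp at h1
  · intro A hne
    rw [hF, ← isUnit_iff_ne_zero, ← Matrix.isUnit_iff_isUnit_det,
      ← Matrix.linearIndependent_cols_iff_isUnit] at hne
    rw [Fintype.linearIndependent_iff] at hne ⊢
    intro c hc
    refine hne c ?_
    ext q
    have := congrFun hc (e q)
    simpa using this

lemma nonfeasible_core (n i l : ℕ) (h3 : 3 * (i + 1) ≤ n + 1) (hl : 3 ≤ l)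
    (hcard : (n + 1) * (n + 1) + (l * (i + 1) - 3) + l * ((i + 1) * (i + 1)) <
      l * ((n + 1) * (i + 1))) :
    ∃ F : MvPolynomial (Fin l × Fin (n + 1) × Fin (i + 1)) ℂ, F ≠ 0 ∧
      ∀ A : Fin l → Matrix (Fin (n + 1)) (Fin (i + 1)) ℂ, 
        MvPolynomial.eval (fun p => A p.1 p.2.1 p.2.2) F ≠ 0 →
        ¬ ∃ C : Set (PP n), IsRNC n C ∧ ∀ j, (C ∩ projSet (A j)).ncard = i + 1 := by
  classical
  let f : Fin 3 ↪ Fin l := Fin.castLEEmb hl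
  obtain ⟨F0, hF0, hgen⟩ := gen_poly n i l f h3
  let kk : Fin 3 → Fin l × Fin (i + 1) := fun a => (f a, 0)
  have hkk : Function.Injective kk := fun a b h => f.injective (congrArg Prod.fst h)
  let T : Finset (Fin l × Fin (i + 1)) := Finset.univ.image kk
  have hT : T.card = 3 := by
    rw [Finset.card_image_of_injective _ hkk]; simp
  let σ := (Fin (n + 1) × Fin (n + 1)) ⊕ {k : Fin l × Fin (i + 1) // k ∉ T} ⊕
    (Fin l × Fin (i + 1) × Fin (i + 1))
  have hσ : Fintype.card σ < Fintype.card (Fin l × Fin (n + 1) × Fin (i + 1)) := by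
    have : Fintype.card {k : Fin l × Fin (i + 1) // k ∉ T} = l * (i + 1) - 3 := by
      rw [Fintype.card_of_subtype (Tᶜ) (by simp), Finset.card_compl, hT]
      simp
    simp only [σ, Fintype.card_sum, this, Fintype.card_prod, Fintype.card_fin]
    omega
  let sP : Fin l × Fin (i + 1) → MvPolynomial σ ℂ := fun k =>
    if h : k ∈ T then MvPolynomial.C (if k = kk 1 then 0 else 1)
    else MvPolynomial.X (Sum.inr (Sum.inl ⟨k, h⟩))
  let φ : (Fin l × Fin (i + 1) → Bool) → Fin l × Fin (n + 1) × Fin (i + 1) → MvPolynomial σ ℂ :=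
    fun ε p => ∑ s, (∑ m : Fin (n + 1), MvPolynomial.X (Sum.inl (p.2.1, m)) *
      (sP (p.1, s) ^ (m : ℕ) * (if ε (p.1, s) then 1 else 0) ^ (n - (m : ℕ)))) *
      MvPolynomial.X (Sum.inr (Sum.inr (p.1, s, p.2.2)))
  choose Fε hFε hFε' using fun ε => exists_relation hσ (φ ε)
  refine ⟨F0 * ∏ ε, Fε ε, mul_ne_zero hF0 (Finset.prod_ne_zero_iff.mpr fun ε _ => hFε ε), ?_⟩
  rintro A hne ⟨C, ⟨M, hM, rfl⟩, hC⟩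
  rw [map_mul, map_prod] at hne
  have hli := hgen A (left_ne_zero_of_mul hne)
  have hne2 := Finset.prod_ne_zero_iff.mp (right_ne_zero_of_mul hne)
  choose v G hv0 hvs hA using fun j => exists_points (by omega) hM (A j) (hC j)
  have hdet : ∀ a b, a ≠ b → v (f a) 0 0 * v (f b) 0 1 - v (f a) 0 1 * v (f b) 0 0 ≠ 0 := by
    intro a b hab h
    obtain ⟨c, hc, hcv⟩ := exists_smul_of_det (hv0 _ _) (hv0 _ _) h
    have hnz : M.mulVec (veron n (v (f a) 0)) ≠ 0 :=
      (mulVec_indep hM (veron_indep n (ι := Unit) (by simp) (fun _ => v (f a) 0)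
        (fun _ => hv0 _ _) (by simp))).ne_zero ()
    have hdis := hli.disjoint_span_image (s := {p | p.1 = a}) (t := {p | p.1 = b}) (by
      rw [Set.disjoint_left]
      intro p hp hp'
      exact hab (hp.symm.trans hp'))
    have hspan : ∀ a, Submodule.span ℂ (Set.range fun j => fun r => A (f a) r j) ≤
        Submodule.span ℂ ((fun p : Fin 3 × Fin (i + 1) => fun r => A (f p.1) r p.2) '' {p | p.1 = a}) := by
      intro a
      apply Submodule.span_mono
      rintro _ ⟨t, rfl⟩
      exact ⟨(a, t), rfl, rfl⟩
    refine hnz ((Submodule.disjoint_def.mp hdis) _ (hspan a (hvs _ _)) (hspan b ?_))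
    have h1 := hvs (f b) 0
    rw [hcv, veron_smul, Matrix.mulVec_smul] at h1
    exact (Submodule.smul_mem_iff _ (pow_ne_zero n hc)).mp h1
  obtain ⟨g, s, ε, c, hnorm, hs0, hs1, hs2⟩ := normalize_pts (fun k : Fin l × Fin (i + 1) => v k.1 k.2)
    (kk 0) (kk 1) (kk 2) (hdet 0 1 (by decide)) (hdet 0 2 (by decide)) (hdet 1 2 (by decide))
  obtain ⟨S, hS⟩ := exists_sym n g
  apply hne2 ε (Finset.mem_univ _)
  let x : σ → ℂ := Sum.elim (fun p => (M * S) p.1 p.2)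
    (Sum.elim (fun k => s k.1) (fun q => c (q.1, q.2.1) ^ n * G q.1 q.2.1 q.2.2))
  have hsP : ∀ k, MvPolynomial.eval x (sP k) = s k := by
    intro k
    simp only [sP]
    split_ifs with h h'
    · rw [h', hs1]; simp
    · obtain ⟨a, _, rfl⟩ := Finset.mem_image.mp h
      fin_cases a
      · simpa using hs0.symm
      · exact absurd rfl h'
      · simpa using hs2.symm
    · simp [x]
  have hφ : ∀ p, MvPolynomial.eval x (φ ε p) = A p.1 p.2.1 p.2.2 := by
    rintro ⟨j, r, t⟩
    rw [hA j r t]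
    simp only [φ, map_sum, map_mul, map_pow, hsP, MvPolynomial.eval_X]
    refine Finset.sum_congr rfl fun z _ => ?_
    have h1 : v j z = c (j, z) • g.mulVec ![s (j, z), if ε (j, z) then 1 else 0] := hnorm (j, z)
    rw [h1, veron_smul, hS, Matrix.mulVec_smul, Matrix.mulVec_mulVec]
    have h2 : MvPolynomial.eval x (if ε (j, z) then 1 else 0) = if ε (j, z) then 1 else 0 := by
      split_ifs <;> simp
    rw [h2]
    simp only [x, Sum.elim_inl, Sum.elim_inr, Pi.smul_apply, smul_eq_mul]
    simp only [Matrix.mulVec, dotProduct, veron, Matrix.cons_val_zero, Matrix.cons_val_one]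
    ring
  have h1 := congrArg (MvPolynomial.aeval x) (hFε' ε)
  rw [map_zero, MvPolynomial.comp_aeval_apply] at h1
  have h2 : (fun p => MvPolynomial.aeval x (φ ε p)) = fun p => A p.1 p.2.1 p.2.2 := by
    ext p
    rw [← hφ p, MvPolynomial.aeval_eq_eval]
  rw [h2, MvPolynomial.aeval_eq_eval] at h1
  exact h1

lemma arith (n i l : ℕ) (hn : 3 ≤ n) (hni : i ^ 2 + 5 * i + 1 < n)
    (h : (n + 3 + i) / (i + 1) < l) :
    3 ≤ l ∧ (n + 1) * (n + 1) + (l * (i + 1) - 3) + l * ((i + 1) * (i + 1)) <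
      l * ((n + 1) * (i + 1)) := by
  have hi0 : 0 < i + 1 := by omega
  rw [Nat.div_lt_iff_lt_mul hi0] at h
  obtain ⟨k, rfl⟩ : ∃ k, l = k + 1 := ⟨l - 1, by
    rcases Nat.eq_zero_or_pos l with h0 | h0
    · subst h0; omega
    · omega⟩
  have hk : n + 3 ≤ k * (i + 1) := by
    have : (k + 1) * (i + 1) = k * (i + 1) + i + 1 := by ring
    omega
  have hk5 : i + 5 ≤ k := by
    by_contra hlt
    have h1 : k * (i + 1) ≤ (i + 4) * (i + 1) := Nat.mul_le_mul_right _ (by omega)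
    have h2 : (i + 4) * (i + 1) = i ^ 2 + 5 * i + 4 := by ring
    omega
  refine ⟨by omega, ?_⟩
  have key : (n + 1) * (n + 1) + (k + 1) * (i + 1) + (k + 1) * ((i + 1) * (i + 1)) <
      (k + 1) * ((n + 1) * (i + 1)) + 3 := by
    obtain ⟨r, hr⟩ : ∃ r, k * (i + 1) = n + 3 + r := ⟨k * (i + 1) - (n + 3), by omega⟩
    have hN : (k + 1) * (i + 1) = n + i + 4 + r := by
      have : (k + 1) * (i + 1) = k * (i + 1) + i + 1 := by ring
      omega
    have e1 : (k + 1) * ((i + 1) * (i + 1)) = (n + i + 4 + r) * (i + 1) := by rw [← hN]; ring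
    have e2 : (k + 1) * ((n + 1) * (i + 1)) = (n + i + 4 + r) * (n + 1) := by rw [← hN]; ring
    rw [e1, e2, hN]
    rcases Nat.eq_zero_or_pos r with rfl | hr0
    · have h1 : (i + 5) * (i + 1) ≤ k * (i + 1) := Nat.mul_le_mul_right _ hk5
      have h2 : i ^ 2 + 5 * i + 3 ≤ n := by
        rcases Nat.eq_zero_or_pos i with rfl | hi0
        · omega
        · have h3 : (i + 5) * (i + 1) = i ^ 2 + 6 * i + 5 := by ring
          omega
      nlinarith
    · have h1 : i + 2 ≤ n := by nlinarith
      obtain ⟨d, rfl⟩ : ∃ d, n = i + 2 + d := ⟨n - (i + 2), by omega⟩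
      nlinarith [Nat.mul_le_mul_right (d + 1) hr0]
  have h3 : 3 ≤ (k + 1) * (i + 1) := by nlinarith
  omega

/-- Homogeneous configurations: `l` generic `i`-dimensional subspaces in `ℙⁿ`, with
`n > i² + 5i + 1`.  Feasible for `l(i+1) ≤ n+3`, non-feasible for `l > ⌈(n+3)/(i+1)⌉`
(the ceiling `⌈(n+3)/(i+1)⌉` is written as `(n + 3 + i) / (i + 1)` in natural division). -/
theorem homogeneous_configurations (n i l : ℕ) (hn : 3 ≤ n) (hi : i ≤ n - 2)
    (hni : i ^ 2 + 5 * i + 1 < n) (hl : 1 ≤ l)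
    (L : Fin (n - 1) → ℕ) (hL : L = fun j => if j.1 = i then l else 0) :
    (l * (i + 1) ≤ n + 3 → Feasible n L) ∧
    ((n + 3 + i) / (i + 1) < l → NonFeasible n L) := by
  have hi0 : i < n - 1 := by omega
  let i0 : Fin (n - 1) := ⟨i, hi0⟩
  have hLi : L i0 = l := by rw [hL]; simp [i0]
  have hLe : ∀ j, j ≠ i0 → L j = 0 := by
    intro j hj
    rw [hL]
    have : j.1 ≠ i := fun h => hj (Fin.ext h)
    simp [this]
  have hinj : Function.Injective (fun p : Fin (L i0) × Fin (n + 1) × Fin (i0.1 + 1) =>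
      (⟨i0, p⟩ : (i : Fin (n - 1)) × (Fin (L i) × Fin (n + 1) × Fin (i.1 + 1)))) := by
    intro p q hpq
    simpa using hpq
  have h3i : 3 * (i + 1) ≤ n + 1 := by nlinarith
  constructor
  · intro h
    obtain ⟨F, hF, hA⟩ := feasible_core n i (L i0) (by omega) (by rw [hLi]; exact h)
    refine ⟨MvPolynomial.rename (Sigma.mk i0) F, fun h0 => hF ?_, fun A hfull hne => ?_⟩
    · exact MvPolynomial.rename_injective _ hinj (by rw [h0, map_zero])
    · rw [MvPolynomial.eval_rename] at hne
      obtain ⟨C, hC, hint⟩ := hA (A i0) (hfull i0) hne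
      refine ⟨C, hC, fun j k => ?_⟩
      by_cases hj : j = i0
      · subst hj; exact hint k
      · have h1 := k.2
        have h2 := hLe j hj
        omega
  · intro h
    obtain ⟨h3, hc⟩ := arith n i l hn hni h
    obtain ⟨F, hF, hA⟩ := nonfeasible_core n i (L i0) h3i (by rw [hLi]; exact h3)
      (by rw [hLi]; exact hc)
    refine ⟨MvPolynomial.rename (Sigma.mk i0) F, fun h0 => hF ?_, fun A hfull hne => ?_⟩
    · exact MvPolynomial.rename_injective _ hinj (by rw [h0, map_zero])
    · rw [MvPolynomial.eval_rename] at hne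
      rintro ⟨C, hC, hint⟩
      exact hA (A i0) hne ⟨C, hC, hint i0⟩

end
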